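/- For positive integers b, c and d, the symmetrical antitree AT(1,b,c,d,c,b,1) (which has diameter 6) is Bonnet-Myers sharp if and only if c=2b+3 and d=3b+1. -/

import Mathlib

open scoped Classical
open Finset

noncomputable section

/-- The degree of a vertex `x` in the graph `G`. -/
def deg {V : Type*} [Fintype V] (G : SimpleGraph V) (x : V) : ℕ :=
  (Finset.univ.filter (fun y => G.Adj x y)).card

/-- The diameter of `G`: the maximum of the combinatorial distance over all pairs of vertices. -/
def diam {V : Type*} [Fintype V] (G : SimpleGraph V) : ℕ :=
  Finset.univ.sup (fun xy : V × V => G.dist xy.1 xy.2)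

/-- The probability measure `μ_x^p` of the lazy simple random walk at `x` with idleness `p`. -/
def mu {V : Type*} [Fintype V] (G : SimpleGraph V) (p : ℝ) (x : V) : V → ℝ :=
  fun z => if z = x then p else if G.Adj x z then (1 - p) / (deg G x : ℝ) else 0

/-- The Wasserstein distance `W₁(μ₁, μ₂)` with respect to the combinatorial distance of `G`:
the infimum of the total transport cost over all transport plans from `μ₁` to `μ₂`. -/
def W1 {V : Type*} [Fintype V] (G : SimpleGraph V) (μ₁ μ₂ : V → ℝ) : ℝ :=
  sInf {c : ℝ | ∃ π : V → V → ℝ,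
    (∀ x y, 0 ≤ π x y ∧ π x y ≤ 1) ∧
    (∀ x, ∑ y, π x y = μ₁ x) ∧
    (∀ y, ∑ x, π x y = μ₂ y) ∧
    c = ∑ x, ∑ y, (G.dist x y : ℝ) * π x y}

/-- The `p`-Ollivier-Ricci curvature `κ_p(x,y) = 1 - W₁(μ_x^p, μ_y^p)`. -/
def kappa {V : Type*} [Fintype V] (G : SimpleGraph V) (p : ℝ) (x y : V) : ℝ :=
  1 - W1 G (mu G p x) (mu G p y)

/-- The Lin-Lu-Yau curvature `κ_LLY(x,y) = lim_{p→1} κ_p(x,y)/(1-p)`. -/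
def kappaLLY {V : Type*} [Fintype V] (G : SimpleGraph V) (x y : V) : ℝ :=
  Filter.limUnder (nhdsWithin 1 (Set.Iio 1)) (fun p => kappa G p x y / (1 - p))

/-- `G` is Bonnet-Myers sharp if the infimum of `κ_LLY` over the edges equals `2/diam(G)`. -/
def BMSharp {V : Type*} [Fintype V] (G : SimpleGraph V) : Prop :=
  sInf {r : ℝ | ∃ x y, G.Adj x y ∧ r = kappaLLY G x y} = 2 / (diam G : ℝ)

/-- `G` is obtained from the complete graph on its vertex set by deleting a matching
(a set of pairwise disjoint edges, encoded as a symmetric irreflexive relation in which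
every vertex has at most one partner). -/
def IsMatchingDeletionOfComplete {V : Type*} (G : SimpleGraph V) : Prop :=
  ∃ M : V → V → Prop, Symmetric M ∧ (∀ x, ¬ M x x) ∧
    (∀ x y z, M x y → M x z → y = z) ∧
    (∀ x y, G.Adj x y ↔ x ≠ y ∧ ¬ M x y)

/-- The graph `G(a,b)` on `2a+b` vertices `u_1, …, u_{2a}, v_1, …, v_b` (encoded as
`Fin (2a+b)`, with `u_i` the index `i-1` and `v_j` the index `2a+j-1`), in which two distinct
vertices are adjacent unless they form a pair `{u_{2i-1}, u_{2i}}`, i.e. `G(a,b)` is the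
complete graph `K_{2a+b}` with a matching of size `a` deleted. -/
def Gab (a b : ℕ) : SimpleGraph (Fin (2*a+b)) where
  Adj x y := x ≠ y ∧ ¬((x : ℕ) < 2*a ∧ (y : ℕ) < 2*a ∧ (x : ℕ)/2 = (y : ℕ)/2)
  symm := by
    constructor
    intro x y h
    exact ⟨h.1.symm, fun hc => h.2 ⟨hc.2.1, hc.1, hc.2.2.symm⟩⟩
  loopless := by constructor; intro x h; exact h.1 rfl

/-- The antitree `AT(a_1, …, a_N)` on the disjoint union of sets `V_1, …, V_N` with
`|V_k| = a_k` (0-indexed here: `V_k` is `Fin (a k)` for `k : Fin N`): two distinct vertices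
are adjacent iff they lie in the same set or in consecutive sets. -/
def antitree (N : ℕ) (a : Fin N → ℕ) : SimpleGraph (Σ k : Fin N, Fin (a k)) where
  Adj x y := x ≠ y ∧
    ((x.1 : ℕ) = (y.1 : ℕ) ∨ (x.1 : ℕ) + 1 = (y.1 : ℕ) ∨ (y.1 : ℕ) + 1 = (x.1 : ℕ))
  symm := by
    constructor
    intro x y h
    refine ⟨h.1.symm, ?_⟩
    rcases h.2 with h2 | h2 | h2
    · exact Or.inl h2.symm
    · exact Or.inr (Or.inr h2)
    · exact Or.inr (Or.inl h2)
  loopless := by constructor; intro x h; exact h.1 rfl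

/-!
The Lin-Lu-Yau curvature of an edge `x ∼ y` is the drop `Δf(x) - Δf(y)` of the Laplacian of any
potential `f` that is optimal for transport along the edge. For an edge between consecutive layers
of an antitree the layer index is such a potential, and its Laplacian on layer `k` is
`Δ_k = (a_{k+1} - a_{k-1}) / (a_{k-1} + a_k + a_{k+1} - 1)`. If all curvatures are at least `2 / L`,
then `Δ_0, …, Δ_L` drops by at least `2 / L` in each of `L` steps; it takes values in `[-1, 1]`,
hence `Δ_k = 1 - 2k / L`. Conversely these equations make the curvature `2 / L` between consecutive
layers, while an edge inside a layer joins vertices with equal unit balls and has curvature at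
least `1`.
-/

open Filter Topology

section Transport

variable {V : Type*} [Fintype V] {μ ν μ' ν' : V → ℝ} {π π' : V → V → ℝ}

/-- `π` is a transport plan (coupling) from `μ` to `ν`. The bound `π ≤ 1` in the definition of `W1`
is left out: it is automatic as soon as `μ ≤ 1`. -/
structure IsTransportPlan (π : V → V → ℝ) (μ ν : V → ℝ) : Prop where
  nonneg : ∀ u v, 0 ≤ π u v
  sum_right : ∀ u, ∑ v, π u v = μ u
  sum_left : ∀ v, ∑ u, π u v = ν v

namespace IsTransportPlan

lemma le_left (h : IsTransportPlan π μ ν) (u v : V) : π u v ≤ μ u :=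
  h.sum_right u ▸ single_le_sum (fun w _ => h.nonneg u w) (mem_univ v)

lemma add (h : IsTransportPlan π μ ν) (h' : IsTransportPlan π' μ' ν') :
    IsTransportPlan (π + π') (μ + μ') (ν + ν') where
  nonneg u v := add_nonneg (h.nonneg u v) (h'.nonneg u v)
  sum_right u := by simp only [Pi.add_apply, sum_add_distrib, h.sum_right, h'.sum_right]
  sum_left v := by simp only [Pi.add_apply, sum_add_distrib, h.sum_left, h'.sum_left]

lemma diagonal (hμ : 0 ≤ μ) : IsTransportPlan (fun u => Pi.single u (μ u)) μ μ where
  nonneg u v := (Pi.single_nonneg.2 (hμ u) : (0 : V → ℝ) ≤ _) v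
  sum_right u := by simp
  sum_left v := by simp

lemma mul_div_sum (hμ : 0 ≤ μ) (hν : 0 ≤ ν) (h : ∑ u, μ u = ∑ u, ν u) :
    IsTransportPlan (fun u v => μ u * ν v / ∑ w, μ w) μ ν where
  nonneg u v := div_nonneg (mul_nonneg (hμ u) (hν v)) (sum_nonneg fun w _ => hμ w)
  sum_right u := by
    rw [← sum_div, ← mul_sum, ← h]
    refine mul_div_cancel_of_imp fun h0 => ?_
    exact (sum_eq_zero_iff_of_nonneg fun w _ => hμ w).1 h0 u (mem_univ u)
  sum_left v := by
    rw [← sum_div, ← sum_mul, h]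
    refine mul_div_cancel_left_of_imp fun h0 => ?_
    exact (sum_eq_zero_iff_of_nonneg fun w _ => hν w).1 h0 v (mem_univ v)

lemma single (u v : V) {m : ℝ} (hm : 0 ≤ m) :
    IsTransportPlan (Pi.single u (Pi.single v m)) (Pi.single u m) (Pi.single v m) where
  nonneg u' v' :=
    (Pi.single_nonneg.2 (Pi.single_nonneg.2 hm) : (0 : V → V → ℝ) ≤ _) u' v'
  sum_right u' := by
    simp only [Pi.single_apply, ite_apply, Pi.zero_apply]
    split_ifs <;> simp
  sum_left v' := by simp [Pi.single_apply, ite_apply]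

lemma sum_sub_mul (h : IsTransportPlan π μ ν) (f : V → ℝ) :
    ∑ u, ∑ v, (f v - f u) * π u v = ∑ z, f z * ν z - ∑ z, f z * μ z := by
  have hν : ∑ u, ∑ v, f v * π u v = ∑ z, f z * ν z := by
    rw [sum_comm]
    simp only [← mul_sum, h.sum_left]
  have hμ : ∑ u, ∑ v, f u * π u v = ∑ z, f z * μ z := by
    simp only [← mul_sum, h.sum_right]
  simp only [sub_mul, sum_sub_distrib, hν, hμ]

end IsTransportPlan

-- The common mass `μ ⊓ ν` stays in place; only the excess of `μ` moves, onto the excess of `ν`.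
lemma exists_isTransportPlan_of_excess (hμ : 0 ≤ μ) (hν : 0 ≤ ν) (h : ∑ u, μ u = ∑ u, ν u) :
    ∃ π, IsTransportPlan π μ ν ∧ ∀ u v, π u v ≠ 0 → u = v ∨ (ν u < μ u ∧ μ v < ν v) := by
  have hsum : ∑ u, (μ - μ ⊓ ν) u = ∑ u, (ν - μ ⊓ ν) u := by
    simp only [Pi.sub_apply, sum_sub_distrib, h]
  have hplan := (IsTransportPlan.diagonal (le_inf hμ hν)).add <|
    IsTransportPlan.mul_div_sum (sub_nonneg.2 inf_le_left) (sub_nonneg.2 inf_le_right) hsum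
  rw [add_sub_cancel, add_sub_cancel] at hplan
  refine ⟨_, hplan, fun u v huv => ?_⟩
  by_contra! hcon
  obtain ⟨hne, hexc⟩ := hcon
  refine huv ?_
  rcases lt_or_ge (ν u) (μ u) with hu | hu
  · simp [Pi.single_eq_of_ne' hne, inf_eq_right.2 (hexc hu)]
  · simp [Pi.single_eq_of_ne' hne, inf_eq_left.2 hu]

variable {G : SimpleGraph V}

lemma W1_comm (G : SimpleGraph V) (μ ν : V → ℝ) : W1 G μ ν = W1 G ν μ := by
  unfold W1
  congr 1
  ext c
  constructor <;>
  · rintro ⟨π, hπ, hμ, hν, rfl⟩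
    refine ⟨fun x y => π y x, fun x y => hπ y x, hν, hμ, ?_⟩
    rw [sum_comm]
    simp only [G.dist_comm]

-- Complementary slackness in Kantorovich duality.
lemma W1_eq_of_isTransportPlan (hπ : IsTransportPlan π μ ν) (hμ : ∀ x, μ x ≤ 1) {f : V → ℝ}
    (hf : ∀ u v, f v - f u ≤ G.dist u v) (htight : ∀ u v, π u v ≠ 0 → G.dist u v ≤ f v - f u) :
    W1 G μ ν = ∑ z, f z * ν z - ∑ z, f z * μ z := by
  refine IsLeast.csInf_eq ⟨⟨π, fun u v => ⟨hπ.nonneg u v, (hπ.le_left u v).trans (hμ u)⟩,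
    hπ.sum_right, hπ.sum_left, ?_⟩, ?_⟩
  · rw [← hπ.sum_sub_mul]
    refine sum_congr rfl fun u _ => sum_congr rfl fun v _ => ?_
    by_cases huv : π u v = 0
    · simp only [huv, mul_zero]
    · rw [le_antisymm (hf u v) (htight u v huv)]
  · rintro _ ⟨ρ, hρ, hρμ, hρν, rfl⟩
    rw [← (IsTransportPlan.mk (fun u v => (hρ u v).1) hρμ hρν).sum_sub_mul]
    gcongr with u _ v _
    exacts [(hρ u v).1, hf u v]

end Transport

section Potential

variable {V : Type*} {G : SimpleGraph V} {x y : V}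

/-- The closed unit ball `B₁(x)`, that is `x` together with its neighbours. -/
def closedNeighborSet (G : SimpleGraph V) (x : V) : Set V :=
  insert x (G.neighborSet x)

/-- `f` is a potential witnessing optimality of transport along the edge `x ∼ y`: it is
`1`-Lipschitz, and transport from `B₁(x)` to `B₁(y)` is along geodesics on which `f` grows at unit
speed, except possibly inside `B₁(x) ∩ B₁(y)`, where mass may stay in place. -/
structure IsKantorovichPotential (G : SimpleGraph V) (x y : V) (f : V → ℝ) : Prop where
  sub_le_dist : ∀ u v, f v - f u ≤ G.dist u v
  sub_eq_one : f y - f x = 1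
  dist_le_sub : ∀ u ∈ closedNeighborSet G x, ∀ v ∈ closedNeighborSet G y,
    u ∉ closedNeighborSet G y ∨ v ∉ closedNeighborSet G x → G.dist u v ≤ f v - f u

lemma isKantorovichPotential_single (hG : G.Connected) (hne : x ≠ y)
    (hball : closedNeighborSet G x = closedNeighborSet G y) :
    IsKantorovichPotential G x y (Pi.single y 1) where
  sub_le_dist u v := by
    rcases eq_or_ne u v with rfl | huv
    · simp
    · have hdist : (1 : ℝ) ≤ G.dist u v := by exact_mod_cast hG.pos_dist_of_ne huv
      refine le_trans ?_ hdist
      simp only [Pi.single_apply]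
      split_ifs <;> norm_num
  sub_eq_one := by simp [hne]
  dist_le_sub u hu v hv huv := by
    rw [← hball] at huv hv
    exact (huv.elim (· hu) (· hv)).elim

end Potential

section StarMeasure

variable {V : Type*} {G : SimpleGraph V} {x y : V} {s t : ℝ}

/-- The measure of mass `s` at `x` and `t` at each neighbour of `x`; the measure `mu G p x` is the
case `s = p`, `t = (1 - p) / deg G x`. -/
def starMeasure (G : SimpleGraph V) (x : V) (s t : ℝ) : V → ℝ :=
  fun z => if z = x then s else if G.Adj x z then t else 0

lemma starMeasure_eq_zero {z : V} (hz : z ∉ closedNeighborSet G x) :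
    starMeasure G x s t z = 0 := by
  rw [closedNeighborSet, Set.mem_insert_iff, SimpleGraph.mem_neighborSet, not_or] at hz
  rw [starMeasure, if_neg hz.1, if_neg hz.2]

lemma starMeasure_le (hts : t ≤ s) (hs : 0 ≤ s) (z : V) : starMeasure G x s t z ≤ s := by
  unfold starMeasure
  split_ifs
  exacts [le_rfl, hts, hs]

lemma le_starMeasure (hts : t ≤ s) {z : V} (hz : z ∈ closedNeighborSet G x) :
    t ≤ starMeasure G x s t z := by
  unfold starMeasure
  split_ifs with hzx hadj
  exacts [hts, le_rfl, (hz.elim hzx hadj).elim]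

lemma starMeasure_nonneg (hs : 0 ≤ s) (ht : 0 ≤ t) : 0 ≤ starMeasure G x s t := by
  intro z
  unfold starMeasure
  split_ifs
  exacts [hs, ht, le_rfl]

lemma starMeasure_add_single (s s' t : ℝ) :
    starMeasure G x s t + Pi.single x s' = starMeasure G x (s + s') t := by
  ext z
  by_cases hz : z = x
  · subst hz; simp [starMeasure]
  · simp [starMeasure, hz]

-- The star whose two masses agree is nowhere exceeded on its ball by the other one.
lemma mem_closedNeighborSet_of_starMeasure_lt {u v : V} (hs : 0 ≤ s) (ht : 0 ≤ t)
    (hu : starMeasure G y (max s t) t u < starMeasure G x (max s t) s u)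
    (hv : starMeasure G x (max s t) s v < starMeasure G y (max s t) t v) :
    u ∈ closedNeighborSet G x ∧ v ∈ closedNeighborSet G y ∧
      (u ∉ closedNeighborSet G y ∨ v ∉ closedNeighborSet G x) := by
  have hsm := le_max_left s t
  have htm := le_max_right s t
  have hm := hs.trans hsm
  refine ⟨?_, ?_, ?_⟩
  · by_contra hux
    exact (hu.trans_eq (starMeasure_eq_zero hux)).not_ge (starMeasure_nonneg hm ht u)
  · by_contra hvy
    exact (hv.trans_eq (starMeasure_eq_zero hvy)).not_ge (starMeasure_nonneg hm hs v)
  · by_contra! ⟨huy, hvx⟩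
    have hs_lt := (le_starMeasure hsm hvx).trans_lt (hv.trans_le (starMeasure_le htm hm v))
    have ht_lt := (le_starMeasure htm huy).trans_lt (hu.trans_le (starMeasure_le hsm hm u))
    exact (max_lt hs_lt ht_lt).false

end StarMeasure

section Curvature

variable {V : Type*} [Fintype V] {G : SimpleGraph V} {x y : V} {f : V → ℝ}

/-- The Laplacian `Δf(x) = (1 / d_x) ∑_{z ∼ x} (f(z) - f(x))` of the simple random walk. -/
def normalizedLaplacian (G : SimpleGraph V) (f : V → ℝ) (x : V) : ℝ :=
  (∑ z with G.Adj x z, (f z - f x)) / deg G x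

lemma deg_pos (h : G.Adj x y) : 0 < deg G x :=
  card_pos.2 ⟨y, mem_filter_univ y |>.2 h⟩

lemma abs_normalizedLaplacian_le_one (hf : ∀ u v, f v - f u ≤ G.dist u v) (x : V) :
    |normalizedLaplacian G f x| ≤ 1 := by
  rw [normalizedLaplacian, abs_div, Nat.abs_cast]
  refine div_le_one_of_le₀ ?_ (Nat.cast_nonneg _)
  calc |∑ z with G.Adj x z, (f z - f x)| ≤ ∑ z with G.Adj x z, |f z - f x| :=
        abs_sum_le_sum_abs _ _
    _ ≤ ∑ z with G.Adj x z, (1 : ℝ) := by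
        refine sum_le_sum fun z hz => abs_sub_le_iff.2 ?_
        have hdist := SimpleGraph.dist_eq_one_iff_adj.2 ((mem_filter_univ z).1 hz)
        have hxz := hf x z
        have hzx := hf z x
        rw [G.dist_comm] at hzx
        rw [hdist, Nat.cast_one] at hxz hzx
        exact ⟨hxz, hzx⟩
    _ = deg G x := by rw [sum_const, nsmul_one, deg]

lemma sum_mul_mu (f : V → ℝ) (p : ℝ) (hx : 0 < deg G x) :
    ∑ z, f z * mu G p x z = f x + (1 - p) * normalizedLaplacian G f x := by
  have hd : (deg G x : ℝ) ≠ 0 := by positivity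
  have hmu : ∀ z, f z * mu G p x z = (if z = x then f z * p else 0) +
      if G.Adj x z then f z * ((1 - p) / deg G x) else 0 := by
    intro z
    unfold mu
    by_cases hz : z = x
    · subst hz; simp
    · simp [hz]
  have hcard : ∑ z with G.Adj x z, f x = deg G x * f x := by
    rw [sum_const, nsmul_eq_mul, deg]
  simp only [hmu, sum_add_distrib, ← sum_filter, sum_sub_distrib, hcard, normalizedLaplacian,
    ← sum_mul]
  rw [sum_filter, sum_ite_eq' univ x]
  simp only [mem_univ, if_true]
  field_simp
  ring

lemma sum_mu (p : ℝ) (hx : 0 < deg G x) : ∑ z, mu G p x z = 1 := by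
  simpa [normalizedLaplacian] using sum_mul_mu (fun _ => 1) p hx

lemma sum_starMeasure (p s : ℝ) (hx : 0 < deg G x) :
    ∑ z, starMeasure G x s ((1 - p) / deg G x) z = 1 - (p - s) := by
  have h := congrArg (fun μ : V → ℝ => ∑ z, μ z)
    (starMeasure_add_single (G := G) (x := x) s (p - s) ((1 - p) / deg G x))
  simp only [Pi.add_apply, sum_add_distrib, sum_pi_single', mem_univ, if_true,
    add_sub_cancel] at h
  exact eq_sub_of_add_eq (h.trans (sum_mu p hx))

lemma mu_le_one {p : ℝ} (hp₀ : 0 ≤ p) (hp₁ : p ≤ 1) (hx : 0 < deg G x) (z : V) :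
    mu G p x z ≤ 1 := by
  rw [← sum_mu p hx]
  exact single_le_sum (f := mu G p x) (fun w _ => starMeasure_nonneg hp₀
    (div_nonneg (sub_nonneg.2 hp₁) (Nat.cast_nonneg _)) w) (mem_univ z)

lemma one_sub_div_deg_le {p : ℝ} (hp : 1 / 2 ≤ p) (hx : 0 < deg G x) :
    (1 - p) / deg G x ≤ p := by
  have hd : (1 : ℝ) ≤ deg G x := by exact_mod_cast hx
  rw [div_le_iff₀ (by positivity)]
  nlinarith

-- All idle mass beyond `m` moves along the edge.
lemma exists_isTransportPlan_mu (h : G.Adj x y) {p : ℝ} (hp : 1 / 2 ≤ p) (hp₁ : p < 1) :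
    ∃ π, IsTransportPlan π (mu G p x) (mu G p y) ∧ ∀ u v, π u v ≠ 0 →
      u = v ∨ (u = x ∧ v = y) ∨ (u ∈ closedNeighborSet G x ∧ v ∈ closedNeighborSet G y ∧
        (u ∉ closedNeighborSet G y ∨ v ∉ closedNeighborSet G x)) := by
  have hx := deg_pos h
  have hy := deg_pos h.symm
  set s := (1 - p) / deg G x
  set t := (1 - p) / deg G y
  set m := max s t
  have hs : 0 ≤ s := div_nonneg (by linarith) (Nat.cast_nonneg _)
  have ht : 0 ≤ t := div_nonneg (by linarith) (Nat.cast_nonneg _)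
  have hm : 0 ≤ m := hs.trans (le_max_left s t)
  have hmp : m ≤ p := max_le (one_sub_div_deg_le hp hx) (one_sub_div_deg_le hp hy)
  obtain ⟨π, hπ, hexc⟩ := exists_isTransportPlan_of_excess
    (starMeasure_nonneg (G := G) (x := x) hm hs) (starMeasure_nonneg (G := G) (x := y) hm ht)
    ((sum_starMeasure p m hx).trans (sum_starMeasure p m hy).symm)
  have hplan := hπ.add (IsTransportPlan.single x y (sub_nonneg.2 hmp))
  rw [starMeasure_add_single, starMeasure_add_single, add_sub_cancel] at hplan
  refine ⟨_, hplan, fun u v huv => ?_⟩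
  by_cases hπuv : π u v = 0
  · refine Or.inr (Or.inl ?_)
    rw [Pi.add_apply, Pi.add_apply, hπuv, zero_add] at huv
    by_contra hxy
    refine huv ?_
    rcases not_and_or.1 hxy with hux | hvy
    · simp [hux]
    · simp [Pi.single_apply, ite_apply, hvy]
  · refine (hexc u v hπuv).imp_right fun hlt => Or.inr ?_
    exact mem_closedNeighborSet_of_starMeasure_lt hs ht hlt.1 hlt.2

namespace IsKantorovichPotential

lemma kappa_eq (hf : IsKantorovichPotential G x y f) (h : G.Adj x y) {p : ℝ} (hp : 1 / 2 ≤ p)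
    (hp₁ : p < 1) :
    kappa G p x y = (1 - p) * (normalizedLaplacian G f x - normalizedLaplacian G f y) := by
  obtain ⟨π, hπ, hsupp⟩ := exists_isTransportPlan_mu h hp hp₁
  have htight : ∀ u v, π u v ≠ 0 → G.dist u v ≤ f v - f u := by
    intro u v huv
    rcases hsupp u v huv with rfl | ⟨rfl, rfl⟩ | ⟨hu, hv, hball⟩
    · simp
    · rw [hf.sub_eq_one, SimpleGraph.dist_eq_one_iff_adj.2 h, Nat.cast_one]
    · exact hf.dist_le_sub u hu v hv hball
  rw [kappa, W1_eq_of_isTransportPlan hπ (mu_le_one (by linarith) hp₁.le (deg_pos h))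
    hf.sub_le_dist htight, sum_mul_mu f p (deg_pos h), sum_mul_mu f p (deg_pos h.symm)]
  linear_combination -hf.sub_eq_one

theorem kappaLLY_eq (hf : IsKantorovichPotential G x y f) (h : G.Adj x y) :
    kappaLLY G x y = normalizedLaplacian G f x - normalizedLaplacian G f y := by
  refine Tendsto.limUnder_eq (tendsto_const_nhds.congr' ?_)
  filter_upwards [Ioo_mem_nhdsLT (by norm_num : (1 / 2 : ℝ) < 1)] with p hp
  rw [hf.kappa_eq h hp.1.le hp.2, mul_div_cancel_left₀ _ (sub_pos.2 hp.2).ne']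

end IsKantorovichPotential

lemma kappaLLY_comm (G : SimpleGraph V) (x y : V) : kappaLLY G x y = kappaLLY G y x := by
  simp only [kappaLLY, kappa, W1_comm G (mu G _ x)]

lemma kappaLLY_of_closedNeighborSet_eq (hG : G.Connected) (h : G.Adj x y)
    (hball : closedNeighborSet G x = closedNeighborSet G y) :
    kappaLLY G x y = 1 + 1 / deg G x := by
  have hne : x ≠ y := h.ne
  have hx : normalizedLaplacian G (Pi.single y 1) x = 1 / deg G x := by
    simp [normalizedLaplacian, hne, sum_pi_single', h]
  have hy : normalizedLaplacian G (Pi.single y 1) y = -1 := by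
    have hd : (deg G y : ℝ) ≠ 0 := by exact_mod_cast (deg_pos h.symm).ne'
    have hcard : ∑ z with G.Adj y z, (1 : ℝ) = deg G y := by rw [sum_const, nsmul_one, deg]
    rw [normalizedLaplacian, sum_sub_distrib, Pi.single_eq_same, hcard]
    simp [sum_pi_single', hd]
  rw [(isKantorovichPotential_single hG hne hball).kappaLLY_eq h, hx, hy]
  ring

lemma BMSharp.two_div_diam_le_kappaLLY (hG : BMSharp G) (h : G.Adj x y) :
    2 / (diam G : ℝ) ≤ kappaLLY G x y := by
  rw [← hG]
  refine csInf_le (Set.Finite.bddBelow ?_) ⟨x, y, h, rfl⟩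
  refine (Set.finite_range fun e : V × V => kappaLLY G e.1 e.2).subset ?_
  rintro _ ⟨u, v, -, rfl⟩
  exact ⟨(u, v), rfl⟩

end Curvature

section Antitree

variable {N : ℕ} {a : Fin N → ℕ}

/-- The layers within distance `1` of layer `k`, that is those adjacent to `V_k` in an antitree. -/
def nearLayers (k : Fin N) : Finset (Fin N) :=
  {j | (j : ℕ) ≤ k + 1 ∧ (k : ℕ) ≤ j + 1}

/-- The degree `a_{k-1} + a_k + a_{k+1} - 1` of the vertices of layer `k` of an antitree, where
layers out of range are empty; an integer, so that the subtraction does not truncate. -/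
def layerDegree (a : Fin N → ℕ) (k : Fin N) : ℤ :=
  ∑ j ∈ nearLayers k, (a j : ℤ) - 1

/-- The number `a_{k+1} - a_{k-1}` of outward minus inward neighbours of the vertices of layer `k`
of an antitree, where layers out of range are empty. -/
def layerDrift (a : Fin N → ℕ) (k : Fin N) : ℤ :=
  ∑ j ∈ nearLayers k, (a j : ℤ) * ((j : ℕ) - (k : ℕ))

/-- The index of the layer of a vertex of an antitree, as a real-valued function. -/
def radius (a : Fin N → ℕ) (x : Σ k : Fin N, Fin (a k)) : ℝ :=
  (x.1 : ℕ)

variable {x y : Σ k : Fin N, Fin (a k)}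

lemma mem_closedNeighborSet_antitree :
    y ∈ closedNeighborSet (antitree N a) x ↔ y.1 ∈ nearLayers x.1 := by
  rw [closedNeighborSet, Set.mem_insert_iff, SimpleGraph.mem_neighborSet]
  simp only [antitree, nearLayers, mem_filter_univ]
  by_cases h : y = x
  · subst h; simp
  · simp only [h, Ne.symm h, false_or, ne_eq, not_false_eq_true, true_and]
    omega

lemma antitree_adj_of_succ_eq (h : (x.1 : ℕ) + 1 = y.1) : (antitree N a).Adj x y :=
  ⟨by rintro rfl; omega, Or.inr (Or.inl h)⟩

lemma sum_antitree_adj (F : Fin N → ℤ) (x : Σ k : Fin N, Fin (a k)) :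
    ∑ z with (antitree N a).Adj x z, F z.1 =
      ∑ j ∈ nearLayers x.1, (a j : ℤ) * F j - F x.1 := by
  have hadj : ∀ z, (antitree N a).Adj x z ↔
      z ∈ closedNeighborSet (antitree N a) x ∧ z ≠ x := fun z => by
    rw [closedNeighborSet, Set.mem_insert_iff, SimpleGraph.mem_neighborSet]
    exact ⟨fun h => ⟨Or.inr h, h.ne'⟩, fun h => h.1.resolve_left h.2⟩
  have herase : ({z | (antitree N a).Adj x z} : Finset (Σ k : Fin N, Fin (a k))) =
      ({z | z.1 ∈ nearLayers x.1} : Finset _).erase x := by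
    ext z
    rw [mem_erase, mem_filter_univ, mem_filter_univ, hadj, mem_closedNeighborSet_antitree, and_comm]
  rw [herase, sum_erase_eq_sub (by simp [nearLayers]), sum_filter, Fintype.sum_sigma]
  simp

lemma deg_antitree (x : Σ k : Fin N, Fin (a k)) :
    (deg (antitree N a) x : ℤ) = layerDegree a x.1 := by
  simpa [deg, layerDegree] using sum_antitree_adj (fun _ => 1) x

lemma normalizedLaplacian_radius (x : Σ k : Fin N, Fin (a k)) :
    normalizedLaplacian (antitree N a) (radius a) x = layerDrift a x.1 / layerDegree a x.1 := by
  have hdrift : ∑ z with (antitree N a).Adj x z, (((z.1 : ℕ) : ℤ) - (x.1 : ℕ)) =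
      layerDrift a x.1 := by
    rw [sum_antitree_adj fun j => ((j : ℕ) : ℤ) - (x.1 : ℕ), sub_self, sub_zero, layerDrift]
  rw [normalizedLaplacian, ← hdrift, ← deg_antitree]
  push_cast
  rfl

lemma exists_walk_antitree (ha : ∀ k, 0 < a k) {n : ℕ} :
    ∀ {x y : Σ k : Fin N, Fin (a k)}, (x.1 : ℕ) + (n + 1) = y.1 →
      ∃ w : (antitree N a).Walk x y, w.length = n + 1 := by
  induction n with
  | zero => exact fun h => ⟨(antitree_adj_of_succ_eq h).toWalk, rfl⟩
  | succ n ih =>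
    intro x y h
    have := y.1.isLt
    let z : Σ k : Fin N, Fin (a k) := ⟨⟨(x.1 : ℕ) + 1, by omega⟩, ⟨0, ha _⟩⟩
    have hz : (x.1 : ℕ) + 1 = z.1 := rfl
    obtain ⟨w, hw⟩ := ih (x := z) (y := y) (by omega)
    exact ⟨.cons (antitree_adj_of_succ_eq hz) w, by rw [SimpleGraph.Walk.length_cons, hw]⟩

lemma antitree_preconnected (ha : ∀ k, 0 < a k) : (antitree N a).Preconnected := by
  have hlt : ∀ {x y : Σ k : Fin N, Fin (a k)}, (x.1 : ℕ) < y.1 → (antitree N a).Reachable x y := by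
    intro x y h
    obtain ⟨w, -⟩ := exists_walk_antitree ha (n := y.1 - x.1 - 1) (x := x) (y := y) (by omega)
    exact ⟨w⟩
  intro x y
  rcases lt_trichotomy (x.1 : ℕ) y.1 with h | h | h
  · exact hlt h
  · rcases eq_or_ne x y with rfl | hne
    · rfl
    · exact SimpleGraph.Adj.reachable ⟨hne, Or.inl h⟩
  · exact (hlt h).symm

lemma antitree_layer_le_add_dist (ha : ∀ k, 0 < a k) (x y : Σ k : Fin N, Fin (a k)) :
    (y.1 : ℕ) ≤ x.1 + (antitree N a).dist x y := by
  obtain ⟨w, hw⟩ := (antitree_preconnected ha x y).exists_walk_length_eq_dist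
  rw [← hw]
  clear hw
  induction w with
  | nil => simp
  | cons h w ih =>
    have hstep := h.2
    rw [SimpleGraph.Walk.length_cons]
    omega

lemma radius_sub_le_dist (ha : ∀ k, 0 < a k) (x y : Σ k : Fin N, Fin (a k)) :
    radius a y - radius a x ≤ (antitree N a).dist x y := by
  rw [radius, radius, sub_le_iff_le_add']
  exact_mod_cast antitree_layer_le_add_dist ha x y

lemma antitree_layer_add_dist_of_lt (ha : ∀ k, 0 < a k) (h : (x.1 : ℕ) < y.1) :
    (x.1 : ℕ) + (antitree N a).dist x y = y.1 := by
  refine le_antisymm ?_ (antitree_layer_le_add_dist ha x y)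
  obtain ⟨w, hw⟩ := exists_walk_antitree ha (n := y.1 - x.1 - 1) (x := x) (y := y) (by omega)
  have hdist := SimpleGraph.dist_le w
  omega

lemma isKantorovichPotential_radius (ha : ∀ k, 0 < a k) (h : (x.1 : ℕ) + 1 = y.1) :
    IsKantorovichPotential (antitree N a) x y (radius a) where
  sub_le_dist := radius_sub_le_dist ha
  sub_eq_one := by rw [radius, radius, ← h, Nat.cast_add_one, add_sub_cancel_left]
  dist_le_sub u hu v hv huv := by
    simp only [mem_closedNeighborSet_antitree, nearLayers, mem_filter_univ] at hu hv huv
    have hdist := antitree_layer_add_dist_of_lt ha (x := u) (y := v) (by omega)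
    rw [radius, radius, ← hdist, Nat.cast_add, add_sub_cancel_left]

lemma kappaLLY_antitree_of_succ_eq (ha : ∀ k, 0 < a k) (h : (x.1 : ℕ) + 1 = y.1) :
    kappaLLY (antitree N a) x y =
      layerDrift a x.1 / layerDegree a x.1 - layerDrift a y.1 / layerDegree a y.1 := by
  rw [(isKantorovichPotential_radius ha h).kappaLLY_eq (antitree_adj_of_succ_eq h),
    normalizedLaplacian_radius, normalizedLaplacian_radius]

lemma one_le_kappaLLY_antitree_of_eq (ha : ∀ k, 0 < a k) (hne : x ≠ y) (h : (x.1 : ℕ) = y.1) :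
    1 ≤ kappaLLY (antitree N a) x y := by
  have hball : closedNeighborSet (antitree N a) x = closedNeighborSet (antitree N a) y := by
    ext z
    rw [mem_closedNeighborSet_antitree, mem_closedNeighborSet_antitree, Fin.ext h]
  have hG : (antitree N a).Connected :=
    { preconnected := antitree_preconnected ha, nonempty := ⟨x⟩ }
  rw [kappaLLY_of_closedNeighborSet_eq hG ⟨hne, Or.inl h⟩ hball]
  exact le_add_of_nonneg_right (by positivity)

end Antitree

section Sharpness

variable {L : ℕ} {a : Fin (L + 1) → ℕ}

lemma diam_antitree (hL : 1 ≤ L) (ha : ∀ k, 0 < a k) : diam (antitree (L + 1) a) = L := by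
  apply le_antisymm
  · refine Finset.sup_le ?_
    rintro ⟨x, y⟩ -
    have hx := x.1.2
    have hy := y.1.2
    dsimp only
    rcases lt_trichotomy (x.1 : ℕ) y.1 with h | h | h
    · have := antitree_layer_add_dist_of_lt ha h
      omega
    · rcases eq_or_ne x y with rfl | hne
      · simp
      · have hadj : (antitree (L + 1) a).Adj x y := ⟨hne, Or.inl h⟩
        rwa [SimpleGraph.dist_eq_one_iff_adj.2 hadj]
    · have := antitree_layer_add_dist_of_lt ha h
      rw [SimpleGraph.dist_comm]
      omega
  · let x : Σ k, Fin (a k) := ⟨0, 0, ha 0⟩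
    let y : Σ k, Fin (a k) := ⟨Fin.last L, 0, ha _⟩
    have hxy : 0 + (antitree (L + 1) a).dist x y = L :=
      antitree_layer_add_dist_of_lt ha (x := x) (y := y) hL
    calc L = (antitree (L + 1) a).dist x y := by omega
      _ ≤ diam (antitree (L + 1) a) :=
        le_sup (f := fun e : (Σ k, Fin (a k)) × (Σ k, Fin (a k)) =>
          (antitree (L + 1) a).dist e.1 e.2) (mem_univ (x, y))

-- The drops `g k - g (k + 1)` are at least `s`, and they telescope to at most `L * s`.
lemma eq_sub_mul_of_succ_add_le {g : Fin (L + 1) → ℝ} {s C : ℝ}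
    (hstep : ∀ k : Fin L, g k.succ + s ≤ g k.castSucc) (h₀ : g 0 ≤ C)
    (hlast : C - L * s ≤ g (Fin.last L)) (k : Fin (L + 1)) : g k = C - k * s := by
  have hanti : Antitone fun k : Fin (L + 1) => g k + k * s := by
    refine Fin.antitone_iff_succ_le.2 fun k => ?_
    have := hstep k
    simp only [Fin.val_succ, Fin.val_castSucc, Nat.cast_add, Nat.cast_one]
    linarith
  have hupper := hanti (Fin.zero_le k)
  have hlower := hanti (Fin.le_last k)
  simp only [Fin.val_zero, Fin.val_last, Nat.cast_zero, zero_mul, add_zero] at hupper hlower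
  linarith

lemma layerDegree_pos (hL : 1 ≤ L) (ha : ∀ k, 0 < a k) (k : Fin (L + 1)) :
    0 < layerDegree a k := by
  obtain ⟨j, hj, hjk⟩ : ∃ j ∈ nearLayers k, j ≠ k := by
    by_cases hk : (k : ℕ) = 0
    · refine ⟨⟨1, by omega⟩, ?_, fun h => ?_⟩
      · simp [nearLayers, hk]
      · simp [← h] at hk
    · refine ⟨⟨k - 1, by omega⟩, ?_, fun h => ?_⟩
      · simp only [nearLayers, mem_filter_univ]
        omega
      · have hval : (k : ℕ) - 1 = k := congrArg Fin.val h
        omega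
  let x : Σ k, Fin (a k) := ⟨k, 0, ha k⟩
  let y : Σ k, Fin (a k) := ⟨j, 0, ha j⟩
  have hxy : (antitree (L + 1) a).Adj x y :=
    (mem_closedNeighborSet_antitree.2 hj : y ∈ closedNeighborSet _ x).resolve_left
      fun h => hjk (congrArg Sigma.fst h)
  rw [show layerDegree a k = _ from (deg_antitree x).symm]
  exact_mod_cast deg_pos hxy

lemma BMSharp.layerDrift_div_layerDegree (hL : 1 ≤ L) (ha : ∀ k, 0 < a k)
    (h : BMSharp (antitree (L + 1) a)) (k : Fin (L + 1)) :
    (layerDrift a k / layerDegree a k : ℝ) = 1 - k * (2 / L) := by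
  have hL₀ : (L : ℝ) ≠ 0 := by positivity
  have hbound : ∀ k, |(layerDrift a k / layerDegree a k : ℝ)| ≤ 1 := fun k =>
    normalizedLaplacian_radius (⟨k, 0, ha k⟩ : Σ k, Fin (a k)) ▸
      abs_normalizedLaplacian_le_one (radius_sub_le_dist ha) _
  refine eq_sub_mul_of_succ_add_le (g := fun k => (layerDrift a k / layerDegree a k : ℝ))
    (fun k => ?_) (abs_le.1 (hbound 0)).2 ?_ k
  · have hk : ((⟨k.castSucc, 0, ha _⟩ : Σ k, Fin (a k)).1 : ℕ) + 1 =
        (⟨k.succ, 0, ha _⟩ : Σ k, Fin (a k)).1 := rfl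
    have hcurv := h.two_div_diam_le_kappaLLY (antitree_adj_of_succ_eq hk)
    rw [diam_antitree hL ha, kappaLLY_antitree_of_succ_eq ha hk] at hcurv
    linarith
  · rw [mul_div_cancel₀ _ hL₀]
    linarith [(abs_le.1 (hbound (Fin.last L))).1]

lemma bmSharp_antitree_of_layerDrift_div_layerDegree (hL : 2 ≤ L) (ha : ∀ k, 0 < a k)
    (h : ∀ k, (layerDrift a k / layerDegree a k : ℝ) = 1 - k * (2 / L)) :
    BMSharp (antitree (L + 1) a) := by
  have hradial : ∀ {x y : Σ k, Fin (a k)}, (x.1 : ℕ) + 1 = y.1 →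
      kappaLLY (antitree (L + 1) a) x y = 2 / L := by
    intro x y hxy
    rw [kappaLLY_antitree_of_succ_eq ha hxy, h, h, ← hxy]
    push_cast
    ring
  rw [BMSharp, diam_antitree (by omega) ha]
  refine IsLeast.csInf_eq ⟨?_, ?_⟩
  · have h01 : ((⟨0, 0, ha 0⟩ : Σ k, Fin (a k)).1 : ℕ) + 1 =
        (⟨⟨1, by omega⟩, 0, ha _⟩ : Σ k, Fin (a k)).1 := rfl
    exact ⟨_, _, antitree_adj_of_succ_eq h01, (hradial h01).symm⟩
  · rintro _ ⟨x, y, hadj, rfl⟩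
    rcases hadj.2 with hxy | hxy | hxy
    · refine le_trans ?_ (one_le_kappaLLY_antitree_of_eq ha hadj.1 hxy)
      exact div_le_one_of_le₀ (by exact_mod_cast hL) (Nat.cast_nonneg L)
    · exact (hradial hxy).ge
    · rw [kappaLLY_comm, hradial hxy]

theorem bmSharp_antitree_iff (hL : 2 ≤ L) (ha : ∀ k, 0 < a k) :
    BMSharp (antitree (L + 1) a) ↔
      ∀ k : Fin (L + 1), L * layerDrift a k = (L - 2 * k) * layerDegree a k := by
  have hL₀ : (L : ℝ) ≠ 0 := by positivity
  have hdeg : ∀ k, (layerDegree a k : ℝ) ≠ 0 := fun k =>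
    Int.cast_ne_zero.2 (layerDegree_pos (by omega) ha k).ne'
  have hclear : ∀ k : Fin (L + 1), (layerDrift a k / layerDegree a k : ℝ) = 1 - k * (2 / L) ↔
      L * layerDrift a k = (L - 2 * k) * layerDegree a k := by
    intro k
    rw [div_eq_iff (hdeg k), ← @Int.cast_inj ℝ, ← mul_right_inj' hL₀]
    push_cast
    field_simp
  rw [← forall_congr' hclear]
  exact ⟨fun h => h.layerDrift_div_layerDegree (by omega) ha,
    bmSharp_antitree_of_layerDrift_div_layerDegree hL ha⟩

end Sharpness

/-- The symmetrical antitree `AT(1,b,c,d,c,b,1)` is Bonnet-Myers sharp iff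
`c = 2b + 3` and `d = 3b + 1`. -/
theorem stmt13 (b c d : ℕ) (hb : 0 < b) (hc : 0 < c) (hd : 0 < d) :
    BMSharp (antitree 7 ![1, b, c, d, c, b, 1]) ↔ c = 2*b + 3 ∧ d = 3*b + 1 := by
  have ha : ∀ k, 0 < (![1, b, c, d, c, b, 1] : Fin 7 → ℕ) k := by
    simp [Fin.forall_fin_succ, hb, hc, hd]
  have hdrift : layerDrift ![1, b, c, d, c, b, 1] =
      (![b, c - 1, d - b, 0, b - d, 1 - c, -b] : Fin 7 → ℤ) := by
    ext k
    fin_cases k <;> simp [layerDrift, nearLayers, sum_filter, Fin.sum_univ_seven] <;> ring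
  have hdegree : layerDegree ![1, b, c, d, c, b, 1] =
      (![b, b + c, b + c + d - 1, 2 * c + d - 1, b + c + d - 1, b + c, b] : Fin 7 → ℤ) := by
    ext k
    fin_cases k <;> simp [layerDegree, nearLayers, sum_filter, Fin.sum_univ_seven] <;> ring
  rw [bmSharp_antitree_iff (by norm_num) ha, hdrift, hdegree]
  refine ⟨fun h => ?_, ?_⟩
  · have h₁ : (6 : ℤ) * (c - 1) = (6 - 2 * 1) * (b + c) := h 1
    have h₂ : (6 : ℤ) * (d - b) = (6 - 2 * 2) * (b + c + d - 1) := h 2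
    omega
  · rintro ⟨rfl, rfl⟩ k
    fin_cases k <;> simp <;> ring
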